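/- For every (P, λ) ∈ Δ_ε one has ω(P,λ) ⊆ Λ_ε(P,λ) ⊆ K_ε. -/

import Mathlib

open MeasureTheory Set Filter Metric

noncomputable section

/-- Planar cross product of two complex numbers viewed as vectors of `ℝ²`. -/
def cross (z w : ℂ) : ℝ := z.re * w.im - z.im * w.re

/-- `v` is the tuple of vertices of a convex `d`-gon, cyclically ordered
(counterclockwise): every vertex lies strictly to the left of every directed edge. -/
def IsConvexPolygon {d : ℕ} [NeZero d] (v : Fin d → ℂ) : Prop :=
  ∀ i j : Fin d, j ≠ i → j ≠ i + 1 → 0 < cross (v (i + 1) - v i) (v j - v i)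

/-- The polygon `P`, as a subset of the plane. -/
def polygonSet {d : ℕ} (v : Fin d → ℂ) : Set ℂ := convexHull ℝ (Set.range v)

/-- The open cone `A k`: points `z` outside `P` whose supporting line (oriented from `z`
towards the polygon, with the interior of `P` on its left) meets `P` exactly at the
vertex `v k`. -/
def cone {d : ℕ} (v : Fin d → ℂ) (k : Fin d) : Set ℂ :=
  {z | ∀ j : Fin d, j ≠ k → 0 < cross (v k - z) (v j - z)}

/-- The singular set `S_P`: the points of `X = ℂ \ P` lying in no cone, i.e. whose
supporting line contains an edge of the polygon. -/
def singSet {d : ℕ} (v : Fin d → ℂ) : Set ℂ :=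
  {z | z ∉ polygonSet v ∧ ∀ k : Fin d, z ∉ cone v k}

/-- The outer billiard map of the polygon with vertices `v` with contraction `lam`:
on the cone `A k` it is `z ↦ -lam • z + (1+lam) • v k` (extended arbitrarily outside
the union of the cones, which is its actual domain `X \ S_P`). -/
def billiardMap {d : ℕ} (v : Fin d → ℂ) (lam : ℝ) (z : ℂ) : ℂ :=
  haveI := Classical.propDecidable (∃ k : Fin d, z ∈ cone v k)
  if h : ∃ k : Fin d, z ∈ cone v k then -(lam : ℂ) * z + (1 + (lam : ℂ)) * v h.choose
  else z

/-- A point is non-singular if its whole forward orbit stays in the union of the open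
cones, i.e. never meets the singular set. -/
def NonSingular {d : ℕ} (v : Fin d → ℂ) (lam : ℝ) (z : ℂ) : Prop :=
  ∀ n : ℕ, (billiardMap v lam)^[n] z ∈ ⋃ k : Fin d, cone v k

/-- The ω-limit set of the forward orbit of `z` under `f`. -/
def omegaSet (f : ℂ → ℂ) (z : ℂ) : Set ℂ :=
  ⋂ m : ℕ, closure ((fun n : ℕ => f^[n] z) '' {n | m ≤ n})

/-- The outer billiard map with contraction is asymptotically periodic: it has finitely
many periodic orbits (equivalently, periodic points) and the ω-limit set of every
non-singular point is a periodic orbit. -/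
def AsymptoticallyPeriodic {d : ℕ} (v : Fin d → ℂ) (lam : ℝ) : Prop :=
  {z : ℂ | NonSingular v lam z ∧ ∃ p : ℕ, 1 ≤ p ∧ (billiardMap v lam)^[p] z = z}.Finite ∧
  ∀ z : ℂ, NonSingular v lam z → ∃ w : ℂ, NonSingular v lam w ∧
    (∃ p : ℕ, 1 ≤ p ∧ (billiardMap v lam)^[p] w = w) ∧
    omegaSet (billiardMap v lam) z = Set.range fun n : ℕ => (billiardMap v lam)^[n] w

/-- The `ε`-neighbourhood `Δ_ε = B_ε(P') × (λ'-ε, λ'+ε)` of `(P', λ')`. -/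
def Delta {d : ℕ} (v' : Fin d → ℂ) (l' ε : ℝ) : Set ((Fin d → ℂ) × ℝ) :=
  Metric.ball v' ε ×ˢ Set.Ioo (l' - ε) (l' + ε)

/-- `a_ε = λ' + ε`. -/
def aEps (l' ε : ℝ) : ℝ := l' + ε

/-- `b_ε = sup {‖P‖ : P ∈ B_ε(P')}` (sup-norm of the vertex tuple). -/
def bEps {d : ℕ} (v' : Fin d → ℂ) (ε : ℝ) : ℝ :=
  sSup ((fun w : Fin d → ℂ => ‖w‖) '' Metric.ball v' ε)

/-- `r_ε = b_ε (1+a_ε)/(1-a_ε)²`. -/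
def rEps {d : ℕ} (v' : Fin d → ℂ) (l' ε : ℝ) : ℝ :=
  bEps v' ε * (1 + aEps l' ε) / (1 - aEps l' ε) ^ 2

/-- `K_ε`: the closed disc of radius `r_ε` centred at the origin. -/
def Keps {d : ℕ} (v' : Fin d → ℂ) (l' ε : ℝ) : Set ℂ :=
  Metric.closedBall (0 : ℂ) (rEps v' l' ε)

/-- `(i 0, …, i (n-1))` is an admissible itinerary of order `n` of `T_{w,lam}`, the
cones being restricted to `K_ε`: the corresponding intersection
`A_{i_0} ∩ T⁻¹(A_{i_1}) ∩ ⋯ ∩ T^{-(n-1)}(A_{i_{n-1}})` is non-empty. -/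
def Admissible {d : ℕ} (v' : Fin d → ℂ) (l' ε : ℝ) (w : Fin d → ℂ) (lam : ℝ)
    {n : ℕ} (i : Fin n → Fin d) : Prop :=
  ∃ z : ℂ, ∀ j : Fin n, (billiardMap w lam)^[(j : ℕ)] z ∈ cone w (i j) ∩ Keps v' l' ε

/-- `I_n^ε`: the itineraries of order `n` admissible for some `(P, λ) ∈ Δ_ε`. -/
def ItinSet {d : ℕ} (v' : Fin d → ℂ) (l' ε : ℝ) (n : ℕ) : Set (Fin n → Fin d) :=
  {i | ∃ q ∈ Delta v' l' ε, Admissible v' l' ε q.1 q.2 i}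

/-- `H(P, λ, i) = (1+λ) ∑_{j=0}^{n-1} (-λ)^{n-j-1} v_{i_j}`. -/
def Hpt {d : ℕ} (w : Fin d → ℂ) (lam : ℝ) {n : ℕ} (i : Fin n → Fin d) : ℂ :=
  (1 + (lam : ℂ)) * ∑ j : Fin n, (-(lam : ℂ)) ^ (n - (j : ℕ) - 1) * w (i j)

/-- The limit set `Λ_ε(P,λ) = ⋂_{m ≥ 1} closure (⋃_{n ≥ m} {H(P,λ,i) : i ∈ I_n^ε})`. -/
def LamSet {d : ℕ} (v' : Fin d → ℂ) (l' ε : ℝ) (w : Fin d → ℂ) (lam : ℝ) : Set ℂ :=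
  ⋂ m : ℕ, ⋂ (_ : 1 ≤ m),
    closure {z : ℂ | ∃ n : ℕ, m ≤ n ∧ ∃ i ∈ ItinSet v' l' ε n, Hpt w lam i = z}

/-- `ω(P,λ)`: the union of the ω-limit sets of all non-singular points. -/
def omegaUnion {d : ℕ} (w : Fin d → ℂ) (lam : ℝ) : Set ℂ :=
  ⋃ z : ℂ, ⋃ (_ : NonSingular w lam z), omegaSet (billiardMap w lam) z

/-!
Along an itinerary `i` of order `n` the map `T` acts as `z ↦ (-λ)ⁿ z + H(P, λ, i)`, so `H` is the
image of the origin under these branches. Since `|λ| < 1`, an orbit and the points `H` of its finite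
itineraries are asymptotic and have the same cluster points. The disc of radius
`(1 + |λ|) ‖P‖ / (1 - |λ|)` is mapped into itself by each branch of `T`, hence contains every `H`;
as `r_ε` is strictly larger, every non-singular orbit eventually stays in `K_ε`, where its
itineraries become admissible.
-/

section ClusterPoints

theorem mapClusterPt_of_tendsto_uniformity {X ι : Type*} [UniformSpace X] {F : Filter ι}
    {u v : ι → X} {x : X} (hu : MapClusterPt x F u)
    (huv : Tendsto (fun i => (u i, v i)) F (uniformity X)) : MapClusterPt x F v := by
  refine mapClusterPt_iff_frequently.2 fun s hs => ?_
  obtain ⟨V, hV, hVs⟩ := UniformSpace.mem_nhds_iff.1 hs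
  obtain ⟨W, hW, hWV⟩ := comp_mem_uniformity_sets hV
  refine ((hu.frequently (UniformSpace.ball_mem_nhds x hW)).and_eventually (huv hW)).mono ?_
  rintro i ⟨x_near_u, u_near_v⟩
  exact hVs (hWV ⟨u i, x_near_u, u_near_v⟩)

theorem mem_omegaSet_iff_mapClusterPt {f : ℂ → ℂ} {z y : ℂ} :
    y ∈ omegaSet f z ↔ MapClusterPt y atTop (fun n => f^[n] z) := by
  rw [MapClusterPt, (atTop_basis.map _).clusterPt_iff_forall_mem_closure]
  simp only [omegaSet, mem_iInter, true_implies]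
  rfl

theorem omegaSet_iterate (f : ℂ → ℂ) (z : ℂ) (N : ℕ) : omegaSet f (f^[N] z) = omegaSet f z := by
  ext y
  rw [mem_omegaSet_iff_mapClusterPt, mem_omegaSet_iff_mapClusterPt]
  simp only [← Function.iterate_add_apply]
  rw [← Function.comp_def (fun n => f^[n] z), mapClusterPt_comp, map_add_atTop_eq_nat]

end ClusterPoints

section OuterBilliard

variable {d : ℕ}

section Hpt

variable {w : Fin d → ℂ} {lam : ℝ}

theorem Hpt_succ (w : Fin d → ℂ) (lam : ℝ) {n : ℕ} (i : Fin (n + 1) → Fin d) :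
    Hpt w lam i =
      -(lam : ℂ) * Hpt w lam (fun j : Fin n => i j.castSucc) +
        (1 + (lam : ℂ)) * w (i (Fin.last n)) := by
  have exponent_succ (j : Fin n) : n + 1 - (j : ℕ) - 1 = n - (j : ℕ) - 1 + 1 := by omega
  simp only [Hpt, Fin.sum_univ_castSucc, Fin.val_castSucc, Fin.val_last, exponent_succ, pow_succ',
    mul_assoc, ← Finset.mul_sum, Nat.add_sub_cancel_left, Nat.sub_self, pow_zero]
  ring

theorem norm_billiard_branch_le (hlam : |lam| < 1) {z : ℂ}
    (hz : ‖z‖ ≤ (1 + |lam|) * ‖w‖ / (1 - |lam|)) (k : Fin d) :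
    ‖-(lam : ℂ) * z + (1 + (lam : ℂ)) * w k‖ ≤ (1 + |lam|) * ‖w‖ / (1 - |lam|) := by
  have one_sub_ne : 1 - |lam| ≠ 0 := (sub_pos.2 hlam).ne'
  have norm_one_add_le : ‖1 + (lam : ℂ)‖ ≤ 1 + |lam| :=
    (norm_add_le _ _).trans_eq (by rw [norm_one, Complex.norm_real, Real.norm_eq_abs])
  calc ‖-(lam : ℂ) * z + (1 + (lam : ℂ)) * w k‖
      ≤ |lam| * ‖z‖ + ‖1 + (lam : ℂ)‖ * ‖w k‖ := by
        refine (norm_add_le _ _).trans_eq ?_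
        rw [norm_mul, norm_mul, norm_neg, Complex.norm_real, Real.norm_eq_abs]
    _ ≤ |lam| * ((1 + |lam|) * ‖w‖ / (1 - |lam|)) + (1 + |lam|) * ‖w‖ := by
        gcongr
        exact norm_le_pi_norm w k
    _ = (1 + |lam|) * ‖w‖ / (1 - |lam|) := by
        field_simp
        ring

theorem norm_Hpt_le (hlam : |lam| < 1) {n : ℕ} (i : Fin n → Fin d) :
    ‖Hpt w lam i‖ ≤ (1 + |lam|) * ‖w‖ / (1 - |lam|) := by
  induction n with
  | zero =>
    have : 0 < 1 - |lam| := sub_pos.2 hlam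
    simp only [Hpt, Finset.univ_eq_empty, Finset.sum_empty, mul_zero, norm_zero]
    positivity
  | succ n ih =>
    rw [Hpt_succ]
    exact norm_billiard_branch_le hlam (ih _) _

end Hpt

section Itinerary

theorem eq_of_mem_cone {v : Fin d → ℂ} {j k : Fin d} {z : ℂ} (hj : z ∈ cone v j)
    (hk : z ∈ cone v k) : j = k := by
  by_contra hne
  have cross_pos : 0 < cross (v j - z) (v k - z) := hj k (Ne.symm hne)
  have cross_swap_pos : 0 < cross (v k - z) (v j - z) := hk j hne
  unfold cross at cross_pos cross_swap_pos
  linarith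

theorem billiardMap_of_mem_cone {v : Fin d → ℂ} (lam : ℝ) {k : Fin d} {z : ℂ}
    (hk : z ∈ cone v k) :
    billiardMap v lam z = -(lam : ℂ) * z + (1 + (lam : ℂ)) * v k := by
  have h : ∃ k : Fin d, z ∈ cone v k := ⟨k, hk⟩
  rw [billiardMap, dif_pos h, eq_of_mem_cone h.choose_spec hk]

/-- `k` is the infinite itinerary of `z` under the outer billiard map of `v` with contraction `lam`.
The cones are not restricted to `K_ε` here, unlike in `Admissible`. -/
def IsItinerary (v : Fin d → ℂ) (lam : ℝ) (z : ℂ) (k : ℕ → Fin d) : Prop :=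
  ∀ n : ℕ, (billiardMap v lam)^[n] z ∈ cone v (k n)

theorem NonSingular.exists_isItinerary {v : Fin d → ℂ} {lam : ℝ} {z : ℂ}
    (hz : NonSingular v lam z) : ∃ k, IsItinerary v lam z k :=
  Classical.skolem.1 fun n => mem_iUnion.1 (hz n)

namespace IsItinerary

variable {v : Fin d → ℂ} {lam : ℝ} {z : ℂ} {k : ℕ → Fin d}

theorem shift (hk : IsItinerary v lam z k) (N : ℕ) :
    IsItinerary v lam ((billiardMap v lam)^[N] z) (fun n => k (n + N)) := fun n => by
  rw [← Function.iterate_add_apply]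
  exact hk (n + N)

theorem iterate_eq (hk : IsItinerary v lam z k) (n : ℕ) :
    (billiardMap v lam)^[n] z =
      (-(lam : ℂ)) ^ n * z + Hpt v lam (fun j : Fin n => k j) := by
  induction n with
  | zero => simp [Hpt]
  | succ n ih =>
    rw [Function.iterate_succ_apply', billiardMap_of_mem_cone lam (hk n), ih, Hpt_succ]
    simp only [Fin.val_castSucc, Fin.val_last]
    ring

theorem tendsto_dist_Hpt (hk : IsItinerary v lam z k) (hlam : |lam| < 1) :
    Tendsto (fun n => dist ((billiardMap v lam)^[n] z) (Hpt v lam (fun j : Fin n => k j)))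
      atTop (nhds 0) := by
  have dist_eq (n : ℕ) :
      dist ((billiardMap v lam)^[n] z) (Hpt v lam (fun j : Fin n => k j)) = |lam| ^ n * ‖z‖ := by
    rw [hk.iterate_eq n, dist_eq_norm, add_sub_cancel_right, norm_mul, norm_pow, norm_neg,
      Complex.norm_real, Real.norm_eq_abs]
  simp only [dist_eq]
  simpa using (tendsto_pow_atTop_nhds_zero_of_lt_one (abs_nonneg lam) hlam).mul_const ‖z‖

theorem eventually_mem_closedBall (hk : IsItinerary v lam z k) (hlam : |lam| < 1) {r : ℝ}
    (hr : (1 + |lam|) * ‖v‖ / (1 - |lam|) < r) :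
    ∀ᶠ n in atTop, (billiardMap v lam)^[n] z ∈ closedBall (0 : ℂ) r := by
  filter_upwards [(hk.tendsto_dist_Hpt hlam).eventually_lt_const (sub_pos.2 hr)] with n hn
  rw [mem_closedBall_zero_iff]
  calc ‖(billiardMap v lam)^[n] z‖
      ≤ dist ((billiardMap v lam)^[n] z) (Hpt v lam (fun j : Fin n => k j)) +
          ‖Hpt v lam (fun j : Fin n => k j)‖ := by
        rw [dist_eq_norm]
        exact norm_le_norm_sub_add _ _
    _ ≤ (r - (1 + |lam|) * ‖v‖ / (1 - |lam|)) + (1 + |lam|) * ‖v‖ / (1 - |lam|) :=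
        add_le_add hn.le (norm_Hpt_le hlam _)
    _ = r := sub_add_cancel _ _

theorem mem_ItinSet {v' : Fin d → ℂ} {l' ε : ℝ} (hk : IsItinerary v lam z k)
    (hΔ : (v, lam) ∈ Delta v' l' ε) (hK : ∀ n, (billiardMap v lam)^[n] z ∈ Keps v' l' ε) (n : ℕ) :
    (fun j : Fin n => k j) ∈ ItinSet v' l' ε n :=
  ⟨(v, lam), hΔ, z, fun j => ⟨hk j, hK j⟩⟩

theorem omegaSet_subset_LamSet {v' : Fin d → ℂ} {l' ε : ℝ} (hk : IsItinerary v lam z k)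
    (hlam : |lam| < 1) (hΔ : (v, lam) ∈ Delta v' l' ε)
    (hK : ∀ n, (billiardMap v lam)^[n] z ∈ Keps v' l' ε) :
    omegaSet (billiardMap v lam) z ⊆ LamSet v' l' ε v lam := by
  intro y hy
  have y_cluster : MapClusterPt y atTop (fun n => Hpt v lam (fun j : Fin n => k j)) :=
    mapClusterPt_of_tendsto_uniformity (mem_omegaSet_iff_mapClusterPt.1 hy)
      (tendsto_uniformity_iff_dist_tendsto_zero.2 (hk.tendsto_dist_Hpt hlam))
  refine mem_iInter₂.2 fun m _ => clusterPt_iff_forall_mem_closure.1 y_cluster _ ?_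
  exact (eventually_ge_atTop m).mono fun n hmn => ⟨n, hmn, _, hk.mem_ItinSet hΔ hK n, rfl⟩

end IsItinerary

end Itinerary

section Radius

variable {v' w : Fin d → ℂ} {l' lam ε : ℝ}

theorem norm_le_bEps (hw : w ∈ ball v' ε) : ‖w‖ ≤ bEps v' ε := by
  obtain ⟨C, hC⟩ := isBounded_iff_forall_norm_le.1 (isBounded_ball (x := v') (r := ε))
  exact le_csSup ⟨C, forall_mem_image.2 hC⟩ (mem_image_of_mem _ hw)

theorem bEps_pos [NeZero d] (v' : Fin d → ℂ) (hε : 0 < ε) : 0 < bEps v' ε := by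
  obtain ⟨w, hw, hw0⟩ :=
    (dense_compl_singleton (0 : Fin d → ℂ)).exists_mem_open isOpen_ball ⟨v', mem_ball_self hε⟩
  exact (norm_pos_iff.2 hw).trans_le (norm_le_bEps hw0)

theorem abs_lt_aEps_of_mem_Delta (hl : 0 ≤ l') (hΔ : (w, lam) ∈ Delta v' l' ε) :
    |lam| < aEps l' ε := by
  obtain ⟨-, hlow, hupp⟩ := hΔ
  rw [aEps, abs_lt]
  constructor <;> linarith

theorem invariant_radius_lt_rEps [NeZero d] (hl : 0 ≤ l') (ha : aEps l' ε < 1)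
    (hΔ : (w, lam) ∈ Delta v' l' ε) : (1 + |lam|) * ‖w‖ / (1 - |lam|) < rEps v' l' ε := by
  have hlam : |lam| < aEps l' ε := abs_lt_aEps_of_mem_Delta hl hΔ
  have a_pos : 0 < aEps l' ε := (abs_nonneg lam).trans_lt hlam
  have one_sub_a_pos : 0 < 1 - aEps l' ε := sub_pos.2 ha
  have b_pos : 0 < bEps v' ε := bEps_pos v' (pos_of_mem_ball hΔ.1)
  calc (1 + |lam|) * ‖w‖ / (1 - |lam|)
      ≤ (1 + aEps l' ε) * bEps v' ε / (1 - aEps l' ε) := by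
        gcongr
        exact norm_le_bEps hΔ.1
    _ = bEps v' ε * (1 + aEps l' ε) / (1 - aEps l' ε) := by rw [mul_comm]
    _ < rEps v' l' ε := by
        refine div_lt_div_of_pos_left (by positivity) (by positivity) ?_
        exact pow_lt_self_of_lt_one₀ one_sub_a_pos (sub_lt_self 1 a_pos) one_lt_two

end Radius

theorem omegaUnion_subset_LamSet {v' w : Fin d → ℂ} {l' lam ε : ℝ} (hlam : |lam| < 1)
    (hr : (1 + |lam|) * ‖w‖ / (1 - |lam|) < rEps v' l' ε) (hΔ : (w, lam) ∈ Delta v' l' ε) :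
    omegaUnion w lam ⊆ LamSet v' l' ε w lam := by
  refine iUnion₂_subset fun z hz => ?_
  obtain ⟨k, hk⟩ := hz.exists_isItinerary
  obtain ⟨N, hN⟩ := eventually_atTop.1 (hk.eventually_mem_closedBall hlam hr)
  rw [← omegaSet_iterate _ z N]
  refine (hk.shift N).omegaSet_subset_LamSet hlam hΔ fun n => ?_
  rw [← Function.iterate_add_apply]
  exact hN (n + N) (Nat.le_add_left N n)

theorem LamSet_subset_Keps {v' w : Fin d → ℂ} {l' lam ε : ℝ} (hlam : |lam| < 1)
    (hr : (1 + |lam|) * ‖w‖ / (1 - |lam|) ≤ rEps v' l' ε) :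
    LamSet v' l' ε w lam ⊆ Keps v' l' ε := by
  refine (iInter₂_subset 1 le_rfl).trans (closure_minimal ?_ isClosed_closedBall)
  rintro _ ⟨n, -, i, -, rfl⟩
  exact mem_closedBall_zero_iff.2 ((norm_Hpt_le hlam i).trans hr)

theorem omega_subset_LamSet_general [NeZero d] {v' w : Fin d → ℂ} {l' lam ε : ℝ} (hl : 0 ≤ l')
    (ha : l' + ε < 1) (hΔ : (w, lam) ∈ Delta v' l' ε) :
    omegaUnion w lam ⊆ LamSet v' l' ε w lam ∧ LamSet v' l' ε w lam ⊆ Keps v' l' ε := by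
  have hlam : |lam| < 1 := (abs_lt_aEps_of_mem_Delta hl hΔ).trans ha
  have hr : (1 + |lam|) * ‖w‖ / (1 - |lam|) < rEps v' l' ε := invariant_radius_lt_rEps hl ha hΔ
  exact ⟨omegaUnion_subset_LamSet hlam hr hΔ, LamSet_subset_Keps hlam hr.le⟩

end OuterBilliard

/-- For every `(P, λ) ∈ Δ_ε` we have `ω(P,λ) ⊆ Λ_ε(P,λ) ⊆ K_ε`. -/
theorem omega_subset_LamSet (d : ℕ) [NeZero d] (hd : 3 ≤ d) (vP : Fin d → ℂ) (lP ε : ℝ)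
    (hconv : IsConvexPolygon vP) (hε : 0 < ε) (hlow : 0 < lP - ε) (hupp : lP + ε < 1)
    (hball : ∀ w : Fin d → ℂ, ‖w - vP‖ < ε → IsConvexPolygon w)
    (q : (Fin d → ℂ) × ℝ) (hq : q ∈ Delta vP lP ε) :
    omegaUnion q.1 q.2 ⊆ LamSet vP lP ε q.1 q.2 ∧
      LamSet vP lP ε q.1 q.2 ⊆ Keps vP lP ε :=
  omega_subset_LamSet_general (hε.trans (sub_pos.1 hlow)).le hupp hq
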